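/- Let α be a type and let A and B be palindromic lists over α, each of even length. Then for every n ≥ 0 the list S_{A,B}(n) is evenly palindromic: there exists an integer k such that the k-th circular shift C_k(S_{A,B}(n)) is palindromic. -/

import Mathlib

/-- Stern's diatomic sequence. -/
def stern : ℕ → ℕ
  | 0 => 0
  | 1 => 1
  | n + 2 =>
    if (n + 2) % 2 = 0 then stern ((n + 2) / 2)
    else stern ((n + 2) / 2) + stern ((n + 2) / 2 + 1)
decreasing_by all_goals omega

/-- OEIS A003602: a(1)=1, a(2n)=a(n), a(2n+1)=n+1. (a(0)=0 as junk value.) -/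
def aseq : ℕ → ℕ
  | 0 => 0
  | 1 => 1
  | n + 2 =>
    if (n + 2) % 2 = 0 then aseq ((n + 2) / 2)
    else (n + 2) / 2 + 1
decreasing_by all_goals omega

-- the modified sequence `a*`: zero at powers of two.
open Classical in
noncomputable def aStar (j : ℕ) : ℕ :=
  if ∃ k, j = 2 ^ k then 0 else aseq j

theorem aseq_le (n : ℕ) : aseq n ≤ n := by
  induction n using Nat.strong_induction_on with
  | _ n ih =>
    match n with
    | 0 => simp [aseq]
    | 1 => simp [aseq]
    | m + 2 =>
      rw [aseq]
      split
      · exact le_trans (ih ((m + 2) / 2) (by omega)) (by omega)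
      · omega

theorem aStar_le (j : ℕ) : aStar j ≤ j := by
  unfold aStar
  split
  · omega
  · exact aseq_le j

/-- The Markov-type sequence `S_{A,B}(n)`. -/
noncomputable def mseq {α : Type*} (A B : List α) : ℕ → List α
  | 0 => A
  | 1 => B
  | 2 => A ++ B
  | n + 3 =>
    if (n + 3) % 2 = 0 then
      mseq A B ((n + 3) / 2) ++ mseq A B (aseq ((n + 3) / 2))
    else
      mseq A B (aStar ((n + 4) / 2 - 1)) ++ mseq A B ((n + 4) / 2)
decreasing_by
  all_goals first
    | omega
    | exact lt_of_le_of_lt (aseq_le _) (by omega)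
    | exact lt_of_le_of_lt (aStar_le _) (by omega)

/-!
Unfolding the recursion, `S(n) = X ++ Y`, where `(X, Y)` is reached from `(A, B)` by the moves
`(X, Y) ↦ (X, X ++ Y)` and `(X, Y) ↦ (X ++ Y, Y)` that generate the Christoffel tree. For every
such pair, `X = A ++ x` and `Y = y ++ B` with `x ++ y` a palindrome (the central word), and
`X ++ Y` is also the product of the palindromes `y ++ A` and `B ++ x`. A product of two palindromes
becomes a palindrome when rotated to the middle of a factor of even length. Such a factor exists
when `A` or `B` has even length: the moves preserve whether both words of the pair have even length,
and `y ++ A`, `B ++ x` have the length parities of `Y`, `X` if `|A| + |B|` is even, the opposite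
ones otherwise.
-/

section Palindrome

variable {α : Type*} {A B U V x y : List α}

theorem exists_eq_append_reverse_of_even_length (hU : U.reverse = U) (hUe : Even U.length) :
    ∃ c, U = c ++ c.reverse := by
  obtain ⟨m, hm⟩ := hUe
  have drop_eq : (U.take m).reverse = U.drop m := by
    rw [List.reverse_take, hU, hm, Nat.add_sub_cancel]
  exact ⟨U.take m, by rw [drop_eq, List.take_append_drop]⟩

theorem exists_reverse_rotate_append_eq (hU : U.reverse = U) (hV : V.reverse = V)
    (heven : Even U.length ∨ Even V.length) :
    ∃ k, ((U ++ V).rotate k).reverse = (U ++ V).rotate k := by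
  rcases heven with hUe | hVe
  · obtain ⟨c, rfl⟩ := exists_eq_append_reverse_of_even_length hU hUe
    refine ⟨c.length, ?_⟩
    rw [List.append_assoc, List.rotate_append_length_eq]
    simp [hV]
  · obtain ⟨c, rfl⟩ := exists_eq_append_reverse_of_even_length hV hVe
    refine ⟨(U ++ c).length, ?_⟩
    rw [← List.append_assoc, List.rotate_append_length_eq]
    simp [hU]

theorem reverse_append_eq_of_append_comm (hA : A.reverse = A) (hB : B.reverse = B)
    (hyA : (y ++ A).reverse = y ++ A) (hBx : (B ++ x).reverse = B ++ x)
    (hcomm : (A ++ x) ++ (y ++ B) = (y ++ A) ++ (B ++ x)) :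
    (x ++ y).reverse = x ++ y := by
  have conjugated : B ++ ((x ++ y).reverse ++ A) = B ++ ((x ++ y) ++ A) :=
    calc B ++ ((x ++ y).reverse ++ A)
      _ = ((A ++ x) ++ (y ++ B)).reverse := by simp [hA, hB]
      _ = ((y ++ A) ++ (B ++ x)).reverse := by rw [hcomm]
      _ = (B ++ x) ++ (y ++ A) := by rw [List.reverse_append, hBx, hyA]
      _ = B ++ ((x ++ y) ++ A) := by simp only [List.append_assoc]
  exact List.append_cancel_right (List.append_cancel_left conjugated)

end Palindrome

/-- The pairs of words in the Christoffel tree rooted at `(A, B)`; the node `(X, Y)` carries the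
Christoffel word `X ++ Y`, presented by its standard factorization. -/
inductive ChristoffelPair {α : Type*} (A B : List α) : List α → List α → Prop
  | root : ChristoffelPair A B A B
  | appendRight {X Y : List α} : ChristoffelPair A B X Y → ChristoffelPair A B X (X ++ Y)
  | appendLeft {X Y : List α} : ChristoffelPair A B X Y → ChristoffelPair A B (X ++ Y) Y

namespace ChristoffelPair

variable {α : Type*} {A B X Y : List α}

theorem even_length_and_iff (h : ChristoffelPair A B X Y) :
    Even X.length ∧ Even Y.length ↔ Even A.length ∧ Even B.length := by
  induction h with
  | root => rfl
  | appendRight _ ih | appendLeft _ ih =>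
    rw [← ih, List.length_append, Nat.even_add]
    tauto

theorem exists_palindromic_factors (hA : A.reverse = A) (hB : B.reverse = B)
    (h : ChristoffelPair A B X Y) :
    ∃ x y, X = A ++ x ∧ Y = y ++ B ∧ (y ++ A).reverse = y ++ A ∧ (B ++ x).reverse = B ++ x ∧
      X ++ Y = (y ++ A) ++ (B ++ x) := by
  induction h with
  | root => exact ⟨[], [], by simp [hA, hB]⟩
  | appendRight _ ih =>
    obtain ⟨x, y, rfl, rfl, hyA, hBx, hcomm⟩ := ih
    have central := reverse_append_eq_of_append_comm hA hB hyA hBx hcomm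
    refine ⟨x, A ++ (x ++ y), rfl, by simp, ?_, hBx, ?_⟩
    · rw [List.reverse_append, List.reverse_append, central, hA, ← List.append_assoc]
    · rw [hcomm]
      simp only [List.append_assoc]
  | appendLeft _ ih =>
    obtain ⟨x, y, rfl, rfl, hyA, hBx, hcomm⟩ := ih
    have central := reverse_append_eq_of_append_comm hA hB hyA hBx hcomm
    refine ⟨(x ++ y) ++ B, y, by simp, rfl, hyA, ?_, ?_⟩
    · rw [List.reverse_append, List.reverse_append, central, hB, List.append_assoc]
    · rw [hcomm]
      simp only [List.append_assoc]

theorem exists_reverse_rotate_eq (hA : A.reverse = A) (hB : B.reverse = B)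
    (heven : Even A.length ∨ Even B.length) (h : ChristoffelPair A B X Y) :
    ∃ k, ((X ++ Y).rotate k).reverse = (X ++ Y).rotate k := by
  have parity := h.even_length_and_iff
  obtain ⟨x, y, rfl, rfl, hyA, hBx, hcomm⟩ := h.exists_palindromic_factors hA hB
  rw [hcomm]
  refine exists_reverse_rotate_append_eq hyA hBx ?_
  simp only [List.length_append, Nat.even_add] at parity ⊢
  tauto

end ChristoffelPair

theorem aseq_two_mul (j : ℕ) : aseq (2 * j) = aseq j := by
  cases j with
  | zero => rfl
  | succ i => rw [Nat.mul_succ, aseq, if_pos (by omega), show (2 * i + 2) / 2 = i + 1 by omega]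

theorem aseq_two_mul_add_one (j : ℕ) : aseq (2 * j + 1) = j + 1 := by
  cases j with
  | zero => simp [aseq]
  | succ i =>
    rw [show 2 * (i + 1) + 1 = (2 * i + 1) + 2 by ring, aseq, if_neg (by omega)]
    omega

theorem aStar_one : aStar 1 = 0 := if_pos ⟨0, rfl⟩

theorem exists_two_mul_eq_two_pow_iff (j : ℕ) : (∃ k, 2 * j = 2 ^ k) ↔ ∃ k, j = 2 ^ k := by
  constructor
  · rintro ⟨_ | k, hk⟩
    · omega
    · exact ⟨k, by rw [pow_succ] at hk; omega⟩
  · rintro ⟨k, rfl⟩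
    exact ⟨k + 1, (pow_succ' 2 k).symm⟩

theorem aStar_two_mul (j : ℕ) : aStar (2 * j) = aStar j := by
  classical exact if_congr (exists_two_mul_eq_two_pow_iff j) rfl (aseq_two_mul j)

theorem aStar_two_mul_add_one {j : ℕ} (hj : j ≠ 0) : aStar (2 * j + 1) = j + 1 := by
  have not_two_pow : ¬∃ k, 2 * j + 1 = 2 ^ k := by
    rintro ⟨_ | k, hk⟩
    · omega
    · rw [pow_succ] at hk
      omega
  rw [aStar, if_neg not_two_pow, aseq_two_mul_add_one]

section MarkovSequence

variable {α : Type*} (A B : List α)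

theorem mseq_two_mul {j : ℕ} (hj : 2 ≤ j) :
    mseq A B (2 * j) = mseq A B j ++ mseq A B (aseq j) := by
  obtain ⟨i, rfl⟩ := Nat.exists_eq_add_of_le' hj
  rw [show 2 * (i + 2) = (2 * i + 1) + 3 by ring, mseq, if_pos (by omega),
    show (2 * i + 1 + 3) / 2 = i + 2 by omega]

theorem mseq_two_mul_add_one {j : ℕ} (hj : j ≠ 0) :
    mseq A B (2 * j + 1) = mseq A B (aStar j) ++ mseq A B (j + 1) := by
  obtain ⟨i, rfl⟩ := Nat.exists_eq_succ_of_ne_zero hj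
  rw [show 2 * i.succ + 1 = 2 * i + 3 by omega, mseq, if_neg (by omega),
    show (2 * i + 4) / 2 = i + 2 by omega, show i + 2 - 1 = i.succ from rfl]

theorem mseq_add_two_eq_append (n : ℕ) :
    mseq A B (n + 2) = mseq A B (aStar (n + 1)) ++ mseq A B (aseq (n + 2)) := by
  obtain ⟨i, rfl | rfl⟩ := n.even_or_odd'
  · rcases eq_or_ne i 0 with rfl | hi
    · simp [mseq, aseq, aStar_one]
    · rw [aStar_two_mul_add_one hi, ← Nat.mul_succ, aseq_two_mul, mseq_two_mul A B (by omega)]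
  · rw [show 2 * i + 1 + 2 = 2 * (i + 1) + 1 by ring, show 2 * i + 1 + 1 = 2 * (i + 1) by ring,
      aStar_two_mul, aseq_two_mul_add_one, mseq_two_mul_add_one A B i.succ_ne_zero]

theorem christoffelPair_mseq (n : ℕ) :
    ChristoffelPair A B (mseq A B (aStar (n + 1))) (mseq A B (aseq (n + 2))) := by
  induction n using Nat.strong_induction_on with
  | _ n ih =>
    obtain ⟨i, rfl | rfl⟩ := n.even_or_odd'
    · cases i with
      | zero => simpa [mseq, aseq, aStar_one] using ChristoffelPair.root
      | succ i =>
        rw [aStar_two_mul_add_one i.succ_ne_zero, ← Nat.mul_succ, aseq_two_mul,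
          mseq_add_two_eq_append]
        exact (ih i (by omega)).appendLeft
    · rw [show 2 * i + 1 + 2 = 2 * (i + 1) + 1 by ring, show 2 * i + 1 + 1 = 2 * (i + 1) by ring,
        aStar_two_mul, aseq_two_mul_add_one, mseq_add_two_eq_append]
      exact (ih i (by omega)).appendRight

end MarkovSequence

theorem stmt2_general {α : Type*} (A B : List α) (hA : A.reverse = A) (hB : B.reverse = B)
    (heven : Even A.length ∨ Even B.length) (n : ℕ) :
    ∃ k : ℕ, ((mseq A B n).rotate k).reverse = (mseq A B n).rotate k := by
  match n with
  | 0 => exact ⟨0, by simpa [mseq] using hA⟩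
  | 1 => exact ⟨0, by simpa [mseq] using hB⟩
  | m + 2 =>
    rw [mseq_add_two_eq_append]
    exact (christoffelPair_mseq A B m).exists_reverse_rotate_eq hA hB heven

/-- for palindromic `A`, `B` of even length, every `S_{A,B}(n)` is evenly
palindromic: some circular shift of it is palindromic. -/
theorem stmt2 {α : Type*} (A B : List α) (hA : A.reverse = A) (hB : B.reverse = B)
    (hAe : Even A.length) (hBe : Even B.length) (n : ℕ) :
    ∃ k : ℕ, ((mseq A B n).rotate k).reverse = (mseq A B n).rotate k := by
  exact stmt2_general A B hA hB (Or.inl hAe) n
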